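/- Let p₁, p₂, r₁, r₂ ∈ (0,∞] satisfy r₁ ≤ min(1,p₁) and r₂ ≤ min(1,p₁,p₂). Let a : ℤ² → ℂ and let f : ℝ² → ℂ be measurable. Define g(x) = Σ_{j∈ℤ²} |a(j)|·|f(x − j)| for x ∈ ℝ². Then ‖g‖_{L^{p₁,p₂}(ℝ²)} ≤ ‖a‖_{ℓ^{r₁,r₂}(ℤ²)}·‖f‖_{L^{p₁,p₂}(ℝ²)}. -/

import Mathlib

open MeasureTheory ENNReal

/-- The `L^p` quasi-norm of an `ℝ≥0∞`-valued function:
`(∫ g^p)^(1/p)` for `p < ∞`, and the essential supremum for `p = ∞`. -/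
noncomputable def eLpNormENN {α : Type*} [MeasurableSpace α] (g : α → ℝ≥0∞)
    (p : ℝ≥0∞) (μ : Measure α) : ℝ≥0∞ :=
  if p = ⊤ then essSup g μ else (∫⁻ x, g x ^ p.toReal ∂μ) ^ (1 / p.toReal)

/-- Mixed `L^{p₁,p₂}` quasi-norm on `ℝ²`: the `L^{p₁}` norm in the first
variable is taken first (over `ℝ`, w.r.t. Lebesgue measure), followed by the
`L^{p₂}` norm in the second variable w.r.t. the measure `μ₂`. -/
noncomputable def mixedLNorm (h : ℝ × ℝ → ℝ≥0∞) (p₁ p₂ : ℝ≥0∞)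
    (μ₂ : Measure ℝ) : ℝ≥0∞ :=
  eLpNormENN (fun x₂ => eLpNormENN (fun x₁ => h (x₁, x₂)) p₁ volume) p₂ μ₂

/-- Mixed `ℓ^{r₁,r₂}` quasi-norm on `ℤ²`: the `ℓ^{r₁}` norm in the first
index is taken first, followed by the `ℓ^{r₂}` norm in the second index
(counting measure realizes the discrete sums/suprema). -/
noncomputable def mixedlNorm (c : ℤ × ℤ → ℝ≥0∞) (r₁ r₂ : ℝ≥0∞) : ℝ≥0∞ :=
  eLpNormENN
    (fun j₂ => eLpNormENN (fun j₁ => c (j₁, j₂)) r₁ (Measure.count : Measure ℤ))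
    r₂ (Measure.count : Measure ℤ)

/-!
For `0 < r ≤ p`, the identity `‖G‖_p ^ r = ‖G ^ r‖_{p/r}` and Minkowski's inequality in `L^{p/r}`
show that a pointwise bound `G ^ r ≤ ∑ i, F i ^ r` implies `‖G‖_p ^ r ≤ ∑ i, ‖F i‖_p ^ r`. If also
`r ≤ 1`, such a bound holds for `G = ∑ i, F i`, because `t ↦ t ^ r` is countably subadditive. Since
measure-preserving maps, such as translations, preserve the norm, this yields the one-variable
inequality `‖∑ j, c j * F (· - j)‖_p ≤ ‖c‖_r ‖F‖_p`.

In two variables, write `N y = ‖φ (·, y)‖_{p₁}` and `A j₂ = ‖c (·, j₂)‖_{r₁}`. The one-variable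
inequality bounds the `j₂`-th row of the convolution by `A j₂ * N (y - j₂)`, and `r₂ ≤ min 1 p₁`
allows the rows to be added after raising to the power `r₂`:
`‖g (·, y)‖_{p₁} ^ r₂ ≤ ∑ j₂, (A j₂ * N (y - j₂)) ^ r₂`.
As `r₂ ≤ p₂`, the one-variable inequality in the second variable applies to exactly this bound.
-/

section CountableSums

variable {ι : Type*}

theorem rpow_tsum_eq_iSup_rpow_sum (u : ι → ℝ≥0∞) {r : ℝ} (hr : 0 < r) :
    (∑' i, u i) ^ r = ⨆ s : Finset ι, (∑ i ∈ s, u i) ^ r := by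
  rw [ENNReal.tsum_eq_iSup_sum]
  exact (ENNReal.orderIsoRpow r hr).map_iSup _

theorem rpow_tsum_le_tsum_rpow (u : ι → ℝ≥0∞) {r : ℝ} (hr : 0 < r) (hr_one : r ≤ 1) :
    (∑' i, u i) ^ r ≤ ∑' i, u i ^ r := by
  rw [rpow_tsum_eq_iSup_rpow_sum u hr]
  refine iSup_le fun s => le_trans ?_ (ENNReal.sum_le_tsum s)
  exact Finset.le_sum_of_subadditive (· ^ r) (ENNReal.zero_rpow_of_pos hr).le
    (fun x y => ENNReal.rpow_add_le_add_rpow x y hr.le hr_one) s u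

end CountableSums

section ENNRealValued

variable {α β ι : Type*} [MeasurableSpace α] [MeasurableSpace β] {μ : Measure α} {ν : Measure β}
  {p r : ℝ≥0∞}

theorem eLpNormENN_eq_eLpNorm (g : α → ℝ≥0∞) (hp : p ≠ 0) (μ : Measure α) :
    eLpNormENN g p μ = eLpNorm g p μ := by
  simp [eLpNormENN, eLpNorm, eLpNormEssSup, eLpNorm', hp]

theorem eLpNorm_eq_lintegral_rpow (g : α → ℝ≥0∞) (hp₀ : p ≠ 0) (hp : p ≠ ∞) :
    eLpNorm g p μ = (∫⁻ x, g x ^ p.toReal ∂μ) ^ p.toReal⁻¹ := by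
  simp only [eLpNorm_eq_lintegral_rpow_enorm_toReal hp₀ hp, enorm_eq_self, one_div]

theorem eLpNorm_top_eq_essSup (g : α → ℝ≥0∞) : eLpNorm g ∞ μ = essSup g μ := by
  simp only [eLpNorm_exponent_top, eLpNormEssSup, enorm_eq_self]

theorem eLpNorm_count_rpow [MeasurableSingletonClass α] (c : α → ℝ≥0∞) (hr₀ : r ≠ 0)
    (hr : r ≠ ∞) : eLpNorm c r Measure.count ^ r.toReal = ∑' i, c i ^ r.toReal := by
  rw [eLpNorm_eq_lintegral_rpow c hr₀ hr, lintegral_count,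
    ENNReal.rpow_inv_rpow (ENNReal.toReal_pos hr₀ hr).ne']

theorem eLpNorm_ennreal_const_mul (c : ℝ≥0∞) {F : α → ℝ≥0∞} (hF : AEMeasurable F μ) :
    eLpNorm (fun x => c * F x) p μ = c * eLpNorm F p μ := by
  rcases eq_or_ne p 0 with rfl | hp₀
  · simp
  rcases eq_or_ne p ∞ with rfl | hp
  · simp only [eLpNorm_top_eq_essSup, ENNReal.essSup_const_mul]
  have hp_pos : 0 < p.toReal := ENNReal.toReal_pos hp₀ hp
  simp only [eLpNorm_eq_lintegral_rpow _ hp₀ hp, ENNReal.mul_rpow_of_nonneg _ _ hp_pos.le]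
  rw [lintegral_const_mul'' _ (hF.pow_const _),
    ENNReal.mul_rpow_of_nonneg _ _ (inv_nonneg.2 hp_pos.le), ENNReal.rpow_rpow_inv hp_pos.ne']

theorem essSup_le_iff_ae_le {F : α → ℝ≥0∞} {c : ℝ≥0∞} : essSup F μ ≤ c ↔ ∀ᵐ x ∂μ, F x ≤ c :=
  ⟨fun h => (ENNReal.ae_le_essSup F).mono fun _ hx => hx.trans h, essSup_le_of_ae_le c⟩

theorem measurable_essSup_prodMk_right [SFinite μ] {F : α × β → ℝ≥0∞} (hF : Measurable F) :
    Measurable fun y => essSup (fun x => F (x, y)) μ := by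
  refine measurable_of_Iic fun c => ?_
  have preimage_eq : (fun y => essSup (fun x => F (x, y)) μ) ⁻¹' Set.Iic c
      = (fun y => μ ((fun x => (x, y)) ⁻¹' (F ⁻¹' Set.Ioi c))) ⁻¹' {0} := by
    ext y
    simp only [Set.mem_preimage, Set.mem_Iic, essSup_le_iff_ae_le, ae_iff, not_le]
    rfl
  rw [preimage_eq]
  exact measurable_measure_prodMk_right (hF measurableSet_Ioi) (measurableSet_singleton 0)

theorem measurable_eLpNorm_prodMk_right [SFinite μ] {F : α × β → ℝ≥0∞} (hF : Measurable F) :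
    Measurable fun y => eLpNorm (fun x => F (x, y)) p μ := by
  rcases eq_or_ne p 0 with rfl | hp₀
  · simp
  rcases eq_or_ne p ∞ with rfl | hp
  · simpa only [eLpNorm_top_eq_essSup] using measurable_essSup_prodMk_right hF
  simp only [eLpNorm_eq_lintegral_rpow _ hp₀ hp]
  exact (hF.pow_const _).lintegral_prod_left'.pow_const _

theorem eLpNorm_rpow_eq_eLpNorm_div (F : α → ℝ≥0∞) (hr₀ : r ≠ 0) (hr : r ≠ ∞) :
    eLpNorm F p μ ^ r.toReal = eLpNorm (fun x => F x ^ r.toReal) (p / r) μ := by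
  have rpow_eq := eLpNorm_enorm_rpow (μ := μ) (p := p / r) F (ENNReal.toReal_pos hr₀ hr)
  rw [ENNReal.ofReal_toReal hr, ENNReal.div_mul_cancel hr₀ hr] at rpow_eq
  exact rpow_eq.symm

variable [Countable ι]

theorem essSup_tsum_le (u : ι → α → ℝ≥0∞) :
    essSup (fun x => ∑' i, u i x) μ ≤ ∑' i, essSup (u i) μ := by
  have ae_le : ∀ᵐ x ∂μ, ∀ i, u i x ≤ essSup (u i) μ :=
    ae_all_iff.2 fun i => ENNReal.ae_le_essSup (u i)
  exact essSup_le_iff_ae_le.2 (ae_le.mono fun _ hx => ENNReal.tsum_le_tsum hx)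

theorem lintegral_rpow_tsum_eq_iSup {u : ι → α → ℝ≥0∞} (hu : ∀ i, AEMeasurable (u i) μ) {q : ℝ}
    (hq : 0 < q) :
    ∫⁻ x, (∑' i, u i x) ^ q ∂μ = ⨆ s : Finset ι, ∫⁻ x, (∑ i ∈ s, u i x) ^ q ∂μ := by
  classical
  simp_rw [rpow_tsum_eq_iSup_rpow_sum _ hq]
  refine lintegral_iSup_directed
    (fun s => (Finset.aemeasurable_fun_sum s fun i _ => hu i).pow_const q) ?_
  exact Monotone.directed_le fun s t hst x =>
    ENNReal.rpow_le_rpow (Finset.sum_le_sum_of_subset hst) hq.le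

theorem eLpNorm_tsum_le {u : ι → α → ℝ≥0∞} (hu : ∀ i, AEMeasurable (u i) μ) (hp : 1 ≤ p) :
    eLpNorm (fun x => ∑' i, u i x) p μ ≤ ∑' i, eLpNorm (u i) p μ := by
  rcases eq_or_ne p ∞ with rfl | hp_top
  · simpa only [eLpNorm_top_eq_essSup] using essSup_tsum_le u
  have hp₀ : p ≠ 0 := (zero_lt_one.trans_le hp).ne'
  have hp_pos : 0 < p.toReal := ENNReal.toReal_pos hp₀ hp_top
  have finite_sum_le (s : Finset ι) :
      (∫⁻ x, (∑ i ∈ s, u i x) ^ p.toReal ∂μ) ^ p.toReal⁻¹ ≤ ∑' i, eLpNorm (u i) p μ := by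
    have minkowski := eLpNorm_sum_le (s := s) (fun i _ => (hu i).aestronglyMeasurable) hp
    rw [eLpNorm_eq_lintegral_rpow _ hp₀ hp_top] at minkowski
    simp only [Finset.sum_apply] at minkowski
    exact minkowski.trans (ENNReal.sum_le_tsum s)
  rw [eLpNorm_eq_lintegral_rpow _ hp₀ hp_top, ENNReal.rpow_inv_le_iff hp_pos,
    lintegral_rpow_tsum_eq_iSup hu hp_pos]
  exact iSup_le fun s => (ENNReal.rpow_inv_le_iff hp_pos).1 (finite_sum_le s)

theorem eLpNorm_rpow_le_tsum {G : α → ℝ≥0∞} {F : ι → α → ℝ≥0∞}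
    (hF : ∀ i, AEMeasurable (F i) μ) (hr₀ : r ≠ 0) (hr : r ≠ ∞) (hrp : r ≤ p)
    (hG : ∀ x, G x ^ r.toReal ≤ ∑' i, F i x ^ r.toReal) :
    eLpNorm G p μ ^ r.toReal ≤ ∑' i, eLpNorm (F i) p μ ^ r.toReal := by
  have one_le_div : 1 ≤ p / r := by
    rwa [ENNReal.le_div_iff_mul_le (.inl hr₀) (.inl hr), one_mul]
  simp only [eLpNorm_rpow_eq_eLpNorm_div _ hr₀ hr]
  calc eLpNorm (fun x => G x ^ r.toReal) (p / r) μ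
      ≤ eLpNorm (fun x => ∑' i, F i x ^ r.toReal) (p / r) μ := eLpNorm_mono_enorm hG
    _ ≤ ∑' i, eLpNorm (fun x => F i x ^ r.toReal) (p / r) μ :=
        eLpNorm_tsum_le (fun i => (hF i).pow_const _) one_le_div

theorem eLpNorm_le_eLpNorm_count_mul [MeasurableSpace ι] [MeasurableSingletonClass ι]
    {T : ι → α → β} (hT : ∀ i, MeasurePreserving (T i) μ ν) (c : ι → ℝ≥0∞) {F : β → ℝ≥0∞}
    (hF : AEMeasurable F ν) {G : α → ℝ≥0∞} (hr₀ : r ≠ 0) (hr : r ≠ ∞) (hrp : r ≤ p)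
    (hG : ∀ x, G x ^ r.toReal ≤ ∑' i, (c i * F (T i x)) ^ r.toReal) :
    eLpNorm G p μ ≤ eLpNorm c r Measure.count * eLpNorm F p ν := by
  have hr_pos : 0 < r.toReal := ENNReal.toReal_pos hr₀ hr
  have hFT (i : ι) : AEMeasurable (fun x => F (T i x)) μ :=
    hF.comp_quasiMeasurePreserving (hT i).quasiMeasurePreserving
  have eLpNorm_term (i : ι) : eLpNorm (fun x => c i * F (T i x)) p μ = c i * eLpNorm F p ν := by
    rw [eLpNorm_ennreal_const_mul _ (hFT i)]
    exact congrArg _ (eLpNorm_comp_measurePreserving hF.aestronglyMeasurable (hT i))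
  rw [← ENNReal.rpow_le_rpow_iff hr_pos]
  calc eLpNorm G p μ ^ r.toReal
      ≤ ∑' i, eLpNorm (fun x => c i * F (T i x)) p μ ^ r.toReal :=
        eLpNorm_rpow_le_tsum (fun i => (hFT i).const_mul _) hr₀ hr hrp hG
    _ = (∑' i, c i ^ r.toReal) * eLpNorm F p ν ^ r.toReal := by
        simp only [eLpNorm_term, ENNReal.mul_rpow_of_nonneg _ _ hr_pos.le, ENNReal.tsum_mul_right]
    _ = (eLpNorm c r Measure.count * eLpNorm F p ν) ^ r.toReal := by
        rw [ENNReal.mul_rpow_of_nonneg _ _ hr_pos.le, eLpNorm_count_rpow c hr₀ hr]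

end ENNRealValued

/-- The mixed `L^{p,q}` quasi-norm on a product space, with the `L^p` quasi-norm in the first
variable taken first. For Lebesgue measure on `ℝ` and for counting measure on `ℤ` it is
definitionally `mixedLNorm` and `mixedlNorm`. -/
noncomputable def mixedNorm {α β : Type*} [MeasurableSpace α] [MeasurableSpace β]
    (h : α × β → ℝ≥0∞) (p q : ℝ≥0∞) (μ : Measure α) (ν : Measure β) : ℝ≥0∞ :=
  eLpNormENN (fun y => eLpNormENN (fun x => h (x, y)) p μ) q ν

theorem mixedNorm_eq_eLpNorm {α β : Type*} [MeasurableSpace α] [MeasurableSpace β]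
    (h : α × β → ℝ≥0∞) {p q : ℝ≥0∞} (hp : p ≠ 0) (hq : q ≠ 0) (μ : Measure α) (ν : Measure β) :
    mixedNorm h p q μ ν = eLpNorm (fun y => eLpNorm (fun x => h (x, y)) p μ) q ν := by
  simp only [mixedNorm, eLpNormENN_eq_eLpNorm _ hp, eLpNormENN_eq_eLpNorm _ hq]

section MixedNorm

variable {α α' β β' ι κ : Type*} [MeasurableSpace α] [MeasurableSpace α'] [MeasurableSpace β]
  [MeasurableSpace β'] {μ : Measure α} {μ' : Measure α'} {ν : Measure β} {ν' : Measure β'}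
  [MeasurableSpace ι] [MeasurableSingletonClass ι] [Countable ι] [Countable κ] {T : ι → α → α'}

theorem eLpNorm_rpow_tsum_prod_le (hT : ∀ i, MeasurePreserving (T i) μ μ') (c : ι × κ → ℝ≥0∞)
    {F : κ → α' → ℝ≥0∞} (hF : ∀ k, AEMeasurable (F k) μ') {p r s : ℝ≥0∞} (hr₀ : r ≠ 0)
    (hr : r ≤ min 1 p) (hs₀ : s ≠ 0) (hs : s ≤ min 1 p) :
    eLpNorm (fun x => ∑' j : ι × κ, c j * F j.2 (T j.1 x)) p μ ^ s.toReal
      ≤ ∑' k, (eLpNorm (fun i => c (i, k)) r Measure.count * eLpNorm (F k) p μ') ^ s.toReal := by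
  obtain ⟨hr_one, hrp⟩ := le_min_iff.1 hr
  obtain ⟨hs_one, hsp⟩ := le_min_iff.1 hs
  have hr_top : r ≠ ∞ := ne_top_of_le_ne_top ENNReal.one_ne_top hr_one
  have hs_top : s ≠ ∞ := ne_top_of_le_ne_top ENNReal.one_ne_top hs_one
  have toReal_le_one {t : ℝ≥0∞} (ht : t ≤ 1) : t.toReal ≤ 1 :=
    ENNReal.toReal_mono ENNReal.one_ne_top ht
  let row (k : κ) (x : α) : ℝ≥0∞ := ∑' i, c (i, k) * F k (T i x)
  have aemeasurable_row (k : κ) : AEMeasurable (row k) μ :=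
    AEMeasurable.tsum fun i =>
      ((hF k).comp_quasiMeasurePreserving (hT i).quasiMeasurePreserving).const_mul _
  have eLpNorm_row_le (k : κ) :
      eLpNorm (row k) p μ ≤ eLpNorm (fun i => c (i, k)) r Measure.count * eLpNorm (F k) p μ' :=
    eLpNorm_le_eLpNorm_count_mul hT _ (hF k) hr₀ hr_top hrp fun x =>
      rpow_tsum_le_tsum_rpow _ (ENNReal.toReal_pos hr₀ hr_top)
        (toReal_le_one hr_one)
  have tsum_eq_tsum_row (x : α) : ∑' j : ι × κ, c j * F j.2 (T j.1 x) = ∑' k, row k x := by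
    rw [ENNReal.tsum_prod', ENNReal.tsum_comm]
  simp only [tsum_eq_tsum_row]
  calc eLpNorm (fun x => ∑' k, row k x) p μ ^ s.toReal
      ≤ ∑' k, eLpNorm (row k) p μ ^ s.toReal :=
        eLpNorm_rpow_le_tsum aemeasurable_row hs₀ hs_top hsp fun x =>
          rpow_tsum_le_tsum_rpow _ (ENNReal.toReal_pos hs₀ hs_top)
            (toReal_le_one hs_one)
    _ ≤ _ := ENNReal.tsum_le_tsum fun k =>
        ENNReal.rpow_le_rpow (eLpNorm_row_le k) ENNReal.toReal_nonneg

theorem stmt_4_general [MeasurableSpace κ] [MeasurableSingletonClass κ] [SFinite μ']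
    {S : κ → β → β'} (hT : ∀ i, MeasurePreserving (T i) μ μ')
    (hS : ∀ k, MeasurePreserving (S k) ν ν') {p₁ p₂ r₁ r₂ : ℝ≥0∞} (hr₁ : 0 < r₁) (hr₂ : 0 < r₂)
    (hr₁p : r₁ ≤ min 1 p₁) (hr₂p : r₂ ≤ min 1 (min p₁ p₂)) (c : ι × κ → ℝ≥0∞)
    {φ : α' × β' → ℝ≥0∞} (hφ : Measurable φ) :
    mixedNorm (fun z => ∑' j : ι × κ, c j * φ (T j.1 z.1, S j.2 z.2)) p₁ p₂ μ ν
      ≤ mixedNorm c r₁ r₂ Measure.count Measure.count * mixedNorm φ p₁ p₂ μ' ν' := by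
  obtain ⟨hr₂_one, hr₂p₁, hr₂p₂⟩ : r₂ ≤ 1 ∧ r₂ ≤ p₁ ∧ r₂ ≤ p₂ := by
    simpa only [le_min_iff] using hr₂p
  have hp₁ : p₁ ≠ 0 := (hr₂.trans_le hr₂p₁).ne'
  have hp₂ : p₂ ≠ 0 := (hr₂.trans_le hr₂p₂).ne'
  have hr₂_top : r₂ ≠ ∞ := ne_top_of_le_ne_top ENNReal.one_ne_top hr₂_one
  simp only [mixedNorm_eq_eLpNorm _ hp₁ hp₂, mixedNorm_eq_eLpNorm _ hr₁.ne' hr₂.ne']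
  have slice_bound (y : β) := eLpNorm_rpow_tsum_prod_le hT c
    (F := fun k x => φ (x, S k y)) (fun k => (hφ.comp measurable_prodMk_right).aemeasurable)
    hr₁.ne' hr₁p hr₂.ne' (le_min hr₂_one hr₂p₁)
  exact eLpNorm_le_eLpNorm_count_mul hS _ (measurable_eLpNorm_prodMk_right hφ).aemeasurable
    hr₂.ne' hr₂_top hr₂p₂ slice_bound

end MixedNorm

/-- Mixed-norm semi-discrete Young-type inequality on `ℝ²`: if
`r₁ ≤ min(1,p₁)`, `r₂ ≤ min(1,p₁,p₂)` and `g(x) = Σ_{j∈ℤ²} |a(j)|·|f(x−j)|`,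
then `‖g‖_{L^{p₁,p₂}} ≤ ‖a‖_{ℓ^{r₁,r₂}}·‖f‖_{L^{p₁,p₂}}`. -/
theorem stmt_4 (p₁ p₂ r₁ r₂ : ℝ≥0∞)
    (hp₁ : 0 < p₁) (hp₂ : 0 < p₂) (hr₁ : 0 < r₁) (hr₂ : 0 < r₂)
    (hr₁p : r₁ ≤ min 1 p₁) (hr₂p : r₂ ≤ min 1 (min p₁ p₂))
    (a : ℤ × ℤ → ℂ) (f : ℝ × ℝ → ℂ) (hf : Measurable f)
    (g : ℝ × ℝ → ℝ≥0∞)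
    (hg : ∀ x, g x = ∑' j : ℤ × ℤ,
      (‖a j‖₊ : ℝ≥0∞) * (‖f (x - ((j.1 : ℝ), (j.2 : ℝ)))‖₊ : ℝ≥0∞)) :
    mixedLNorm g p₁ p₂ volume
      ≤ mixedlNorm (fun j => (‖a j‖₊ : ℝ≥0∞)) r₁ r₂
          * mixedLNorm (fun x => (‖f x‖₊ : ℝ≥0∞)) p₁ p₂ volume := by
  obtain rfl : g = _ := funext hg
  have translation (j : ℤ) : MeasurePreserving (fun x : ℝ => x - j) volume volume :=
    measurePreserving_sub_right volume (j : ℝ)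
  exact stmt_4_general translation translation hr₁ hr₂ hr₁p hr₂p (fun j => ‖a j‖₊)
    (φ := fun x => ‖f x‖₊) hf.nnnorm.coe_nnreal_ennreal
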